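/- arXiv:1208.1449 — 4 statements merged into one kernel-verified Lean document; each statement's English description precedes it below -/
import Mathlib

section
/- Let k ≥ 1 and |m|² ∈ [0,1]. For the uniform weight vector w = (1/k,…,1/k), the vector s = S(1−|m|², |m|²; w) is given by s_1 = |m|²/k + (1−|m|²)/k² and s_i = (1−|m|²)/k² for 2 ≤ i ≤ k. Consequently the limiting eigenvalue vector of the output state consists of |m|²/k + (1−|m|²)/k² with multiplicity one, (1−|m|²)/k² with multiplicity k−1, and 1/k² with multiplicity k²−k. Moreover, the Shannon entropy H of the probability vector ( |m|²/k + (1−|m|²)/k², (1−|m|²)/k² repeated k−1 times, 1/k² repeated k²−k times ) is a decreasing function of |m|² on [0,1]. -/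
open Matrix
open scoped BigOperators

/-- The matrix `H_Σ(x,y;w)`: diagonal entries `(x+y)w_i²`, off-diagonal entries `y w_i w_j`. -/
def HSigma {k : ℕ} (x y : ℝ) (w : Fin k → ℝ) : Matrix (Fin k) (Fin k) ℝ :=
  Matrix.of fun i j => if i = j then (x + y) * w i ^ 2 else y * w i * w j

theorem HSigma_isHermitian {k : ℕ} (x y : ℝ) (w : Fin k → ℝ) : (HSigma x y w).IsHermitian := by
  unfold Matrix.IsHermitian
  ext i j
  simp only [HSigma, conjTranspose_apply, Matrix.of_apply, star_trivial]
  by_cases h : i = j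
  · subst h; simp
  · rw [if_neg h, if_neg (Ne.symm h)]; ring

/-- `S(x,y;w)`: the eigenvalues of `H_Σ(x,y;w)`, listed in decreasing order. -/
noncomputable def Svec {k : ℕ} (x y : ℝ) (w : Fin k → ℝ) : Fin k → ℝ :=
  fun i => (HSigma_isHermitian x y w).eigenvalues
    (Tuple.sort (HSigma_isHermitian x y w).eigenvalues i.rev)

/-! At `t = 0` the `k²` output eigenvalues are all equal to `1/k²`, and they depend affinely on `t`.
The entropy is concave and maximal at the uniform vector, so it decreases along every segment
of probability vectors that starts there. The eigenvalues themselves come from the decomposition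
of `H_Σ` for constant weights into a scalar matrix plus a rank-one matrix. -/

section Multiset

variable {ι α : Type*} [Fintype ι] [DecidableEq ι]

theorem map_univ_update_const (i : ι) (a b : α) :
    Finset.univ.val.map (Function.update (fun _ => b) i a) =
      Multiset.replicate (Fintype.card ι - 1) b + {a} := by
  have off_i : (Finset.univ.erase i).val.map (Function.update (fun _ => b) i a) =
      Multiset.replicate (Fintype.card ι - 1) b := by
    rw [Multiset.map_congr rfl (g := fun _ => b) fun j hj =>
      Function.update_of_ne (Finset.ne_of_mem_erase hj) _ _, Multiset.map_const']
    simp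
  rw [← Finset.insert_erase (Finset.mem_univ i),
    Finset.insert_val_of_notMem (Finset.notMem_erase i _), Multiset.map_cons, off_i,
    Function.update_self, add_comm, Multiset.singleton_add]

theorem map_univ_prod_ite_eq (f : ι → α) (c : α) :
    Finset.univ.val.map (fun ij : ι × ι => if ij.1 = ij.2 then f ij.1 else c) =
      Multiset.replicate (Fintype.card ι ^ 2 - Fintype.card ι) c + Finset.univ.val.map f := by
  have univ_eq : (Finset.univ : Finset (ι × ι)) =
      Finset.univ.offDiag.disjUnion Finset.univ.diag (Finset.disjoint_diag_offDiag _).symm := by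
    rw [Finset.disjUnion_eq_union, Finset.union_comm, Finset.diag_union_offDiag,
      Finset.univ_product_univ]
  have map_offDiag : (Finset.univ : Finset ι).offDiag.val.map
      (fun ij : ι × ι => if ij.1 = ij.2 then f ij.1 else c) =
        Multiset.replicate (Fintype.card ι ^ 2 - Fintype.card ι) c := by
    rw [Multiset.map_congr rfl (g := fun _ => c) fun ij hij =>
      if_neg (Finset.mem_offDiag.mp hij).2.2, Multiset.map_const', sq]
    simp
  rw [univ_eq, Finset.disjUnion_val, Multiset.map_add, map_offDiag]
  simp [Finset.diag, Function.comp_def]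

end Multiset

theorem eq_of_antitone_of_map_univ_eq {n : ℕ} {α : Type*} [PartialOrder α] {f g : Fin n → α}
    (hf : Antitone f) (hg : Antitone g)
    (h : Finset.univ.val.map f = Finset.univ.val.map g) : f = g := by
  rw [Fin.univ_val_map, Fin.univ_val_map, Multiset.coe_eq_coe] at h
  exact List.ofFn_injective (h.eq_of_sortedGE hf.sortedGE_ofFn hg.sortedGE_ofFn)

open Polynomial in
theorem charpoly_scalar_add_vecMulVec {n R : Type*} [Fintype n] [DecidableEq n] [Nonempty n]
    [CommRing R] (μ : R) (u v : n → R) :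
    (scalar n μ + vecMulVec u v).charpoly =
      (X - C μ) ^ (Fintype.card n - 1) * (X - C (u ⬝ᵥ v + μ)) := by
  have hcard : Fintype.card n - 1 + 1 = Fintype.card n := Nat.sub_add_cancel Fintype.card_pos
  have shift : scalar n μ + vecMulVec u v = vecMulVec u v - scalar n (-μ) := by
    rw [map_neg, sub_neg_eq_add, add_comm]
  rw [shift, charpoly_sub_scalar, charpoly_vecMulVec]
  nth_rw 1 [← hcard]
  simp only [smul_eq_C_mul, sub_comp, pow_comp, mul_comp, X_comp, C_comp, C_neg, C_add]
  ring

theorem antitoneOn_lineMap_of_isMaxOn {𝕜 E β : Type*} [Field 𝕜] [LinearOrder 𝕜]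
    [IsStrictOrderedRing 𝕜] [AddCommGroup E] [Module 𝕜 E] [AddCommGroup β] [LinearOrder β]
    [IsOrderedAddMonoid β] [Module 𝕜 β] [IsStrictOrderedModule 𝕜 β] {s : Set E} {f : E → β}
    {a b : E} (hf : ConcaveOn 𝕜 s f) (hmax : IsMaxOn f s a) (ha : a ∈ s) (hb : b ∈ s) :
    AntitoneOn (fun t : 𝕜 => f (AffineMap.lineMap a b t)) (Set.Icc 0 1) := by
  intro t ht u hu htu
  have hu_mem : AffineMap.lineMap a b u ∈ s := hf.1.lineMap_mem ha hb hu
  have min_le := (hf.comp_affineMap (AffineMap.lineMap a b)).min_le_of_mem_Icc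
    (x := 0) (by simpa) hu_mem ⟨ht.1, htu⟩
  simp only [Function.comp_apply, AffineMap.lineMap_apply_zero] at min_le
  rwa [min_eq_right (hmax hu_mem)] at min_le

section Eigenvalues

variable {k : ℕ} (x y : ℝ)

theorem Svec_antitone (w : Fin k → ℝ) : Antitone (Svec x y w) :=
  fun _ _ h => Tuple.monotone_sort _ (Fin.rev_le_rev.mpr h)

theorem map_univ_Svec (w : Fin k → ℝ) :
    Finset.univ.val.map (Svec x y w) = (HSigma x y w).charpoly.roots := by
  let σ := Fin.revPerm.trans (Tuple.sort (HSigma_isHermitian x y w).eigenvalues)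
  rw [(HSigma_isHermitian x y w).roots_charpoly_eq_eigenvalues]
  conv_rhs => rw [← Multiset.map_univ_val_equiv σ, Multiset.map_map]
  rfl

theorem HSigma_const (c : ℝ) :
    HSigma x y (fun _ : Fin k => c) =
      scalar (Fin k) (x * c ^ 2) + vecMulVec (fun _ => y * c) (fun _ => c) := by
  ext i j
  by_cases hij : i = j
  · simp only [HSigma, hij, of_apply, if_true, scalar_apply, Matrix.add_apply, diagonal_apply_eq,
      vecMulVec_apply]
    ring
  · simp [HSigma, vecMulVec_apply, hij]

variable [NeZero k]

open Polynomial in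
theorem map_univ_Svec_const (c : ℝ) :
    Finset.univ.val.map (Svec x y (fun _ : Fin k => c)) =
      Multiset.replicate (k - 1) (x * c ^ 2) + {(x + k * y) * c ^ 2} := by
  have top_root : (fun _ : Fin k => y * c) ⬝ᵥ (fun _ => c) + x * c ^ 2 = (x + k * y) * c ^ 2 := by
    simp only [dotProduct, Finset.sum_const, Finset.card_univ, Fintype.card_fin, nsmul_eq_mul]
    ring
  rw [map_univ_Svec, HSigma_const, charpoly_scalar_add_vecMulVec, top_root,
    roots_mul (mul_ne_zero (pow_ne_zero _ (X_sub_C_ne_zero _)) (X_sub_C_ne_zero _)), roots_pow,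
    roots_X_sub_C, roots_X_sub_C, Multiset.nsmul_singleton, Fintype.card_fin]

theorem Svec_const (hy : 0 ≤ y) (c : ℝ) :
    Svec x y (fun _ : Fin k => c) =
      Function.update (fun _ => x * c ^ 2) 0 ((x + k * y) * c ^ 2) := by
  have gap : x * c ^ 2 ≤ (x + k * y) * c ^ 2 := by
    gcongr
    exact le_add_of_nonneg_right (by positivity)
  refine eq_of_antitone_of_map_univ_eq (Svec_antitone _ _ _) (fun i j hij => ?_) ?_
  · rcases eq_or_ne j 0 with rfl | hj
    · rw [nonpos_iff_eq_zero.mp hij]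
    · rw [Function.update_of_ne hj]
      rcases eq_or_ne i 0 with rfl | hi
      · rwa [Function.update_self]
      · rw [Function.update_of_ne hi]
  · rw [map_univ_Svec_const, map_univ_update_const, Fintype.card_fin]

end Eigenvalues

section Entropy

open Real

variable {ι : Type*} [Fintype ι]

/-- The Shannon entropy `H(p) = -∑ i, p i * log (p i)`, in nats, of a vector `p` indexed by a
finite type; `p` is not required to be a probability vector. -/
noncomputable def shannonEntropy (p : ι → ℝ) : ℝ := ∑ i, negMulLog (p i)

theorem concaveOn_shannonEntropy :
    ConcaveOn ℝ (Set.Ici (0 : ι → ℝ)) shannonEntropy := by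
  refine ⟨convex_Ici 0, fun p hp q hq a b ha hb hab => ?_⟩
  simp only [shannonEntropy, Finset.smul_sum, ← Finset.sum_add_distrib]
  exact Finset.sum_le_sum fun i _ => concaveOn_negMulLog.2 (hp i) (hq i) ha hb hab

theorem isMaxOn_shannonEntropy_uniform :
    IsMaxOn shannonEntropy (stdSimplex ℝ ι) (fun _ => (Fintype.card ι : ℝ)⁻¹) := by
  intro p ⟨hp_nonneg, hp_sum⟩
  have : Nonempty ι := not_isEmpty_iff.mp fun _ => by simp at hp_sum
  have jensen := concaveOn_negMulLog.le_map_sum (t := Finset.univ)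
    (w := fun _ => (Fintype.card ι : ℝ)⁻¹) (fun _ _ => by positivity)
    (by simp) (fun i _ => hp_nonneg i)
  simp only [smul_eq_mul, ← Finset.mul_sum, hp_sum, mul_one] at jensen
  simpa [shannonEntropy] using (inv_mul_le_iff₀ (by positivity)).mp jensen

theorem antitoneOn_shannonEntropy_lineMap_uniform {p : ι → ℝ} (hp : p ∈ stdSimplex ℝ ι) :
    AntitoneOn (fun t : ℝ => shannonEntropy
      (AffineMap.lineMap (fun _ : ι => (Fintype.card ι : ℝ)⁻¹) p t)) (Set.Icc 0 1) := by
  have : Nonempty ι := not_isEmpty_iff.mp fun _ => by simpa using hp.2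
  exact antitoneOn_lineMap_of_isMaxOn
    (concaveOn_shannonEntropy.subset (fun q hq => hq.1) (convex_stdSimplex ℝ ι))
    isMaxOn_shannonEntropy_uniform ⟨fun _ => by positivity, by simp⟩ hp

end Entropy

section OutputEigenvalues

variable {k : ℕ}

/-- The limiting eigenvalues of the output state, indexed by pairs: the products `w i * w j`
at `i ≠ j` and the entries of `S(x,y;w)` on the diagonal. -/
noncomputable def outputEigenvalues (x y : ℝ) (w : Fin k → ℝ) (ij : Fin k × Fin k) : ℝ :=
  if ij.1 = ij.2 then Svec x y w ij.1 else w ij.1 * w ij.2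

theorem map_univ_outputEigenvalues_const [NeZero k] (x y c : ℝ) :
    Finset.univ.val.map (outputEigenvalues x y (fun _ : Fin k => c)) =
      Multiset.replicate (k ^ 2 - k) (c ^ 2) + Multiset.replicate (k - 1) (x * c ^ 2) +
        {(x + k * y) * c ^ 2} := by
  rw [add_assoc, ← map_univ_Svec_const, sq c]
  exact (map_univ_prod_ite_eq (Svec x y fun _ => c) (c * c)).trans (by rw [Fintype.card_fin])

theorem sum_comp_outputEigenvalues_const [NeZero k] (g : ℝ → ℝ) (x y c : ℝ) :
    ∑ ij, g (outputEigenvalues x y (fun _ : Fin k => c) ij) =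
      g ((x + k * y) * c ^ 2) + (k - 1) * g (x * c ^ 2) + (k ^ 2 - k) * g (c ^ 2) := by
  have hk : 1 ≤ k := NeZero.one_le
  have hk_sq : k ≤ k ^ 2 := Nat.le_self_pow two_ne_zero k
  have h := congrArg (fun s => (s.map g).sum) (map_univ_outputEigenvalues_const (k := k) x y c)
  simp only [Multiset.map_map, Multiset.map_add, Multiset.map_replicate, Multiset.map_singleton,
    Multiset.sum_add, Multiset.sum_replicate, Multiset.sum_singleton, nsmul_eq_mul,
    Nat.cast_sub hk, Nat.cast_sub hk_sq, Nat.cast_pow, Nat.cast_one] at h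
  refine h.trans ?_
  ring

theorem outputEigenvalues_const_eq_lineMap [NeZero k] {t : ℝ} (ht : 0 ≤ t) (c : ℝ) :
    outputEigenvalues (1 - t) t (fun _ : Fin k => c) =
      AffineMap.lineMap (fun _ => c ^ 2) (outputEigenvalues 0 1 fun _ : Fin k => c) t := by
  ext ij
  simp only [outputEigenvalues, Svec_const _ _ ht, Svec_const _ _ zero_le_one,
    AffineMap.lineMap_apply_module, Pi.add_apply, Pi.smul_apply, smul_eq_mul, Function.update_apply]
  split_ifs <;> ring

theorem outputEigenvalues_uniform_mem_stdSimplex [NeZero k] :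
    outputEigenvalues 0 1 (fun _ : Fin k => (k : ℝ)⁻¹) ∈ stdSimplex ℝ (Fin k × Fin k) := by
  refine ⟨fun ij => ?_, ?_⟩
  · simp only [outputEigenvalues, Svec_const _ _ zero_le_one, Function.update_apply]
    split_ifs <;> positivity
  · have hk : (k : ℝ) ≠ 0 := NeZero.ne _
    refine (sum_comp_outputEigenvalues_const id 0 1 _).trans ?_
    simp only [id]
    field_simp
    ring

theorem antitoneOn_shannonEntropy_outputEigenvalues_uniform [NeZero k] :
    AntitoneOn (fun t : ℝ =>
      shannonEntropy (outputEigenvalues (1 - t) t fun _ : Fin k => (k : ℝ)⁻¹)) (Set.Icc 0 1) := by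
  refine (antitoneOn_shannonEntropy_lineMap_uniform
    (outputEigenvalues_uniform_mem_stdSimplex (k := k))).congr fun t ht => ?_
  simp [outputEigenvalues_const_eq_lineMap ht.1, sq]

end OutputEigenvalues

/-- The case of the uniform weight vector `w = (1/k, …, 1/k)`.  Writing `t = |m|² ∈ [0,1]`:
(1) the vector `s = S(1−t, t; w)` is `s_1 = t/k + (1−t)/k²` and `s_i = (1−t)/k²` for `i ≥ 2`;
(2) consequently the collection of `k²` limiting output eigenvalues
`{w_i w_j : i ≠ j} ∪ {s_i}` is: `t/k + (1−t)/k²` with multiplicity one, `(1−t)/k²` with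
multiplicity `k−1`, and `1/k²` with multiplicity `k²−k`;
(3) the Shannon entropy of this probability vector is a decreasing function of `t` on `[0,1]`. -/
theorem uniform_weights_eigenvalues_and_entropy (k : ℕ) (hk : 0 < k) :
    (∀ t : ℝ, 0 ≤ t → t ≤ 1 →
      Svec (1 - t) t (fun _ : Fin k => (k : ℝ)⁻¹) ⟨0, hk⟩ =
          t / k + (1 - t) / (k : ℝ) ^ 2 ∧
        ∀ i : Fin k, i ≠ ⟨0, hk⟩ →
          Svec (1 - t) t (fun _ : Fin k => (k : ℝ)⁻¹) i = (1 - t) / (k : ℝ) ^ 2) ∧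
    (∀ t : ℝ, 0 ≤ t → t ≤ 1 →
      (Finset.univ.val.map (fun ij : Fin k × Fin k =>
          if ij.1 = ij.2 then Svec (1 - t) t (fun _ : Fin k => (k : ℝ)⁻¹) ij.1
          else (k : ℝ)⁻¹ * (k : ℝ)⁻¹)) =
        Multiset.replicate (k ^ 2 - k) (((k : ℝ) ^ 2)⁻¹) +
          Multiset.replicate (k - 1) ((1 - t) / (k : ℝ) ^ 2) +
          {t / k + (1 - t) / (k : ℝ) ^ 2}) ∧
    AntitoneOn (fun t : ℝ =>
        -((t / k + (1 - t) / (k : ℝ) ^ 2) * Real.log (t / k + (1 - t) / (k : ℝ) ^ 2) +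
          ((k : ℝ) - 1) * ((1 - t) / (k : ℝ) ^ 2) * Real.log ((1 - t) / (k : ℝ) ^ 2) +
          ((k : ℝ) ^ 2 - k) * ((k : ℝ) ^ 2)⁻¹ * Real.log (((k : ℝ) ^ 2)⁻¹)))
      (Set.Icc 0 1) := by
  have : NeZero k := ⟨hk.ne'⟩
  have hk0 : (k : ℝ) ≠ 0 := NeZero.ne _
  have top_eq (t : ℝ) : (1 - t + k * t) * (k : ℝ)⁻¹ ^ 2 = t / k + (1 - t) / (k : ℝ) ^ 2 := by
    field_simp
    ring
  have rest_eq (t : ℝ) : (1 - t) * (k : ℝ)⁻¹ ^ 2 = (1 - t) / (k : ℝ) ^ 2 := by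
    rw [inv_pow, div_eq_mul_inv]
  refine ⟨fun t ht _ => ?_, fun t _ _ => ?_, ?_⟩
  · rw [Svec_const _ _ ht, top_eq, rest_eq]
    exact ⟨Function.update_self .., fun i hi => Function.update_of_ne hi ..⟩
  · rw [← top_eq, ← rest_eq, ← inv_pow]
    exact map_univ_outputEigenvalues_const (1 - t) t _
  · refine antitoneOn_shannonEntropy_outputEigenvalues_uniform (k := k) |>.congr fun t _ => ?_
    refine (sum_comp_outputEigenvalues_const Real.negMulLog (1 - t) t _).trans ?_
    rw [top_eq, rest_eq, inv_pow]
    simp only [Real.negMulLog]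
    ring
end

section
/- Let W = diag(w_1,…,w_k) be a real diagonal k × k matrix, let x, y ∈ R, and let p ≥ 1. Then Σ_{∅ ≠ A ⊆ [p]} x^{p−|A|} y^{|A|} ∏_{i=1}^{|A|} Tr[W^{2(a_{i+1}−a_i)}] = Σ_{i=1}^k s_i^p − x^p Tr[W^{2p}], where for A = {a_1 < a_2 < ⋯ < a_{|A|}} one sets a_{|A|+1} − a_{|A|} := p + a_1 − a_{|A|}, and s = S(x,y;w) is the eigenvalue vector of the matrix H_Σ(x,y;w). -/
open Matrix
open scoped BigOperators

/-- For a nonempty subset `A = {a_1 < a_2 < ⋯ < a_r} ⊆ [p]`, the product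
`∏_{i=1}^r Tr[W^{2(a_{i+1} − a_i)}]` of traces over the cyclic successive gaps of `A`,
where `a_{r+1} − a_r` is understood as `p + a_1 − a_r`. -/
noncomputable def cyclicGapProd {k : ℕ} (p : ℕ) (W : Matrix (Fin k) (Fin k) ℝ)
    (A : Finset (Fin p)) : ℝ :=
  ((A.sort (· ≤ ·)).zipWith
    (fun a b : Fin p =>
      if a.1 < b.1 then Matrix.trace (W ^ (2 * (b.1 - a.1)))
      else Matrix.trace (W ^ (2 * (p + b.1 - a.1))))
    ((A.sort (· ≤ ·)).rotate 1)).prod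

/-!
Since `H_Σ(x,y;w) = x W² + y w wᵀ`, expanding its `p`-th power gives one word in the letters
`x W²` and `y w wᵀ` for each set `A ⊆ [p]` of positions carrying the second letter.  The trace is
cyclic and the second letter has rank one, so for `A ≠ ∅` the trace of the word factors over the
cyclic gaps `g` of `A`, with factors `wᵀ (x W²)^(g-1) (y w) = y x^(g-1) Tr[W^(2g)]`; the gaps sum
to `p`.  The word with `A = ∅` contributes `x^p Tr[W^(2p)]`.
-/

section CyclicGaps

variable {n : ℕ}

/-- The distance from `a` forward to `b` on a cycle of length `n`.  The distance from a point to
itself is `n`, not `0`. -/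
def cyclicGap (n a b : ℕ) : ℕ := if a < b then b - a else n + b - a

/-- The distances on a cycle of length `n` from each entry of a list to the next entry, where the
last entry is followed by the first. -/
def cyclicGaps (n : ℕ) (l : List ℕ) : List ℕ := l.zipWith (cyclicGap n) (l.rotate 1)

/-- The elements of a subset of `Fin n`, listed as natural numbers in increasing order. -/
def sortedVals (A : Finset (Fin n)) : List ℕ := (A.sort (· ≤ ·)).map Fin.val

theorem cyclicGap_pos {a : ℕ} (ha : a < n) (b : ℕ) : 0 < cyclicGap n a b := by
  unfold cyclicGap
  split_ifs <;> omega

theorem cyclicGaps_cons (n a : ℕ) (l : List ℕ) :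
    cyclicGaps n (a :: l) = (a :: l).zipWith (cyclicGap n) (l ++ [a]) := by
  simp [cyclicGaps]

theorem length_cyclicGaps (n : ℕ) (l : List ℕ) : (cyclicGaps n l).length = l.length := by
  simp [cyclicGaps]

theorem pos_of_mem_cyclicGaps {l : List ℕ} (hl : ∀ a ∈ l, a < n) {g : ℕ}
    (hg : g ∈ cyclicGaps n l) : 0 < g := by
  rw [cyclicGaps, ← List.map_uncurry_zip_eq_zipWith, List.mem_map] at hg
  obtain ⟨⟨a, b⟩, hab, rfl⟩ := hg
  exact cyclicGap_pos (hl a (List.of_mem_zip hab).1) b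

theorem sum_zipWith_cyclicGap {c : ℕ} {l : List ℕ} :
    ∀ {a : ℕ}, c ≤ a → (a :: l).Pairwise (· < ·) → (∀ b ∈ a :: l, b < n) →
      ((a :: l).zipWith (cyclicGap n) (l ++ [c])).sum = n + c - a := by
  induction l with
  | nil =>
    intro a hca _ _
    simp [cyclicGap, hca.not_gt]
  | cons b l ih =>
    intro a hca hsorted hlt
    have hab : a < b := List.rel_of_pairwise_cons hsorted (by simp)
    have hbn : b < n := hlt b (by simp)
    rw [List.cons_append, List.zipWith_cons_cons, List.sum_cons,
      ih (hca.trans hab.le) hsorted.of_cons (List.forall_mem_of_forall_mem_cons hlt),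
      cyclicGap, if_pos hab]
    omega

theorem sum_cyclicGaps {l : List ℕ} (hne : l ≠ []) (hsorted : l.Pairwise (· < ·))
    (hlt : ∀ a ∈ l, a < n) : (cyclicGaps n l).sum = n := by
  obtain ⟨a, l, rfl⟩ := List.exists_cons_of_ne_nil hne
  rw [cyclicGaps_cons, sum_zipWith_cyclicGap le_rfl hsorted hlt, Nat.add_sub_cancel]

theorem length_sortedVals (A : Finset (Fin n)) : (sortedVals A).length = A.card := by
  simp [sortedVals]

theorem pairwise_sortedVals (A : Finset (Fin n)) : (sortedVals A).Pairwise (· < ·) :=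
  List.pairwise_map.2 A.sortedLT_sort.pairwise

theorem lt_of_mem_sortedVals {A : Finset (Fin n)} {a : ℕ} (ha : a ∈ sortedVals A) : a < n := by
  obtain ⟨i, -, rfl⟩ := List.mem_map.1 ha
  exact i.isLt

theorem val_mem_sortedVals {A : Finset (Fin n)} {i : Fin n} : i.val ∈ sortedVals A ↔ i ∈ A := by
  simp [sortedVals, Fin.val_inj]

theorem sortedVals_empty : sortedVals (∅ : Finset (Fin n)) = [] := by
  simp [sortedVals]

theorem sortedVals_ne_nil {A : Finset (Fin n)} (hA : A.Nonempty) : sortedVals A ≠ [] := by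
  rw [← List.length_pos_iff, length_sortedVals]
  exact hA.card_pos

theorem cyclicGapProd_eq_prod_map_cyclicGaps {k : ℕ} (W : Matrix (Fin k) (Fin k) ℝ)
    (A : Finset (Fin n)) :
    cyclicGapProd n W A =
      ((cyclicGaps n (sortedVals A)).map fun g => trace (W ^ (2 * g))).prod := by
  simp only [cyclicGapProd, cyclicGaps, sortedVals, ← List.map_rotate, List.zipWith_map,
    List.map_zipWith, cyclicGap, apply_ite (fun g => trace (W ^ (2 * g)))]

end CyclicGaps

section Words

variable {M : Type*}

/-- The ordered product over the positions `c, c + 1, …, n - 1` of a word in the letters `a` and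
`b`, where `b` occupies the positions listed in `l`. -/
def wordProd [Monoid M] (a b : M) (l : List ℕ) (c n : ℕ) : M :=
  ((List.range' c (n - c)).map fun t => if t ∈ l then b else a).prod

theorem wordProd_nil [Monoid M] (a b : M) (c n : ℕ) : wordProd a b [] c n = a ^ (n - c) := by
  simp [wordProd]

theorem wordProd_cons [Monoid M] (a b : M) {l : List ℕ} {c m n : ℕ} (hcm : c ≤ m) (hmn : m < n)
    (hl : ∀ t ∈ l, m < t) :
    wordProd a b (m :: l) c n = a ^ (m - c) * b * wordProd a b l (m + 1) n := by
  have hsplit : List.range' c (n - c) =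
      List.range' c (m - c) ++ m :: List.range' (m + 1) (n - (m + 1)) := by
    rw [← List.range'_succ, show n - c = m - c + (n - (m + 1) + 1) by omega,
      ← List.range'_append_1, Nat.add_sub_cancel' hcm]
  have hbefore : (List.range' c (m - c)).map (fun t => if t ∈ m :: l then b else a) =
      List.replicate (m - c) a := by
    refine List.eq_replicate_iff.2 ⟨by simp, fun z hz => ?_⟩
    obtain ⟨t, ht, rfl⟩ := List.mem_map.1 hz
    have htm : t < m := by
      rw [List.mem_range'_1] at ht
      omega
    exact if_neg (List.not_mem_cons_of_ne_of_not_mem htm.ne fun h => (hl t h).not_gt htm)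
  have hafter : (List.range' (m + 1) (n - (m + 1))).map (fun t => if t ∈ m :: l then b else a) =
      (List.range' (m + 1) (n - (m + 1))).map (fun t => if t ∈ l then b else a) := by
    refine List.map_congr_left fun t ht => ?_
    have htm : t ≠ m := by
      rw [List.mem_range'_1] at ht
      omega
    simp only [List.mem_cons, htm, false_or]
  rw [wordProd, hsplit, List.map_append, List.map_cons, hbefore, hafter, List.prod_append,
    List.prod_replicate, List.prod_cons, if_pos List.mem_cons_self, ← mul_assoc, wordProd]

theorem add_pow_eq_sum_wordProd [Semiring M] (a b : M) (n : ℕ) :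
    (a + b) ^ n = ∑ A : Finset (Fin n), wordProd a b (sortedVals A) 0 n := by
  have hexpand := (MultilinearMap.mkPiAlgebraFin ℕ n M).map_add_univ (fun _ => b) (fun _ => a)
  simp only [MultilinearMap.mkPiAlgebraFin_apply, Pi.add_def, List.ofFn_const,
    List.prod_replicate, add_comm b a] at hexpand
  rw [hexpand]
  refine Finset.sum_congr rfl fun A _ => congrArg List.prod ?_
  simp only [Nat.sub_zero, ← List.range_eq_range', ← List.map_coe_finRange_eq_range, List.map_map,
    List.ofFn_eq_map, Function.comp_def, val_mem_sortedVals]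
  rfl

end Words

theorem prod_map_mul_pow_sub_one {R : Type*} [CommMonoid R] (x y : R) (f : ℕ → R) {l : List ℕ}
    (hl : ∀ g ∈ l, 0 < g) :
    (l.map fun g => y * x ^ (g - 1) * f g).prod =
      x ^ (l.sum - l.length) * y ^ l.length * (l.map f).prod := by
  induction l with
  | nil => simp
  | cons g l ih =>
    have hl' : ∀ g ∈ l, 0 < g := List.forall_mem_of_forall_mem_cons hl
    have hg : 0 < g := hl g List.mem_cons_self
    have hlen : l.length ≤ l.sum := List.length_le_sum_of_one_le l hl'
    have hexp : g + l.sum - (l.length + 1) = g - 1 + (l.sum - l.length) := by omega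
    rw [List.map_cons, List.prod_cons, ih hl', List.sum_cons, List.length_cons, hexp, pow_add,
      pow_succ, List.map_cons, List.prod_cons]
    ac_rfl

section RankOne

variable {ι R : Type*} [Fintype ι] [CommSemiring R]

theorem trace_mul_vecMulVec (A : Matrix ι ι R) (u v : ι → R) :
    trace (A * vecMulVec u v) = v ⬝ᵥ A *ᵥ u := by
  rw [mul_vecMulVec, trace_vecMulVec, dotProduct_comm]

theorem dotProduct_mul_vecMulVec_mul_mulVec (A B : Matrix ι ι R) (u v : ι → R) :
    v ⬝ᵥ (A * vecMulVec u v * B) *ᵥ u = (v ⬝ᵥ A *ᵥ u) * (v ⬝ᵥ B *ᵥ u) := by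
  rw [mul_vecMulVec, vecMulVec_mul, vecMulVec_mulVec, dotProduct_smul, ← dotProduct_mulVec]
  simp

variable [DecidableEq ι] {n : ℕ} (D : Matrix ι ι R) (u v : ι → R)

theorem dotProduct_wordProd_mul_pow_mulVec {c : ℕ} {l : List ℕ} :
    ∀ {a : ℕ}, c ≤ a → (a :: l).Pairwise (· < ·) → (∀ b ∈ a :: l, b < n) →
      v ⬝ᵥ (wordProd D (vecMulVec u v) l (a + 1) n * D ^ c) *ᵥ u =
        (((a :: l).zipWith (cyclicGap n) (l ++ [c])).map fun g => v ⬝ᵥ D ^ (g - 1) *ᵥ u).prod := by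
  induction l with
  | nil =>
    intro a hca _ hlt
    have han : a < n := hlt a (by simp)
    have hgap : n - (a + 1) + c = cyclicGap n a c - 1 := by
      rw [cyclicGap, if_neg hca.not_gt]
      omega
    simp [wordProd_nil, ← pow_add, hgap]
  | cons b l ih =>
    intro a hca hsorted hlt
    have hab : a < b := List.rel_of_pairwise_cons hsorted (by simp)
    have hgap : b - (a + 1) = cyclicGap n a b - 1 := by
      rw [cyclicGap, if_pos hab]
      omega
    rw [wordProd_cons _ _ hab (hlt b (by simp)) fun _ => List.rel_of_pairwise_cons hsorted.of_cons,
      mul_assoc _ _ (D ^ c), dotProduct_mul_vecMulVec_mul_mulVec, hgap,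
      ih (hca.trans hab.le) hsorted.of_cons (List.forall_mem_of_forall_mem_cons hlt),
      List.cons_append, List.zipWith_cons_cons, List.map_cons, List.prod_cons]

theorem trace_wordProd_vecMulVec {l : List ℕ} (hne : l ≠ []) (hsorted : l.Pairwise (· < ·))
    (hlt : ∀ a ∈ l, a < n) :
    trace (wordProd D (vecMulVec u v) l 0 n) =
      ((cyclicGaps n l).map fun g => v ⬝ᵥ D ^ (g - 1) *ᵥ u).prod := by
  obtain ⟨a, l, rfl⟩ := List.exists_cons_of_ne_nil hne
  rw [wordProd_cons _ _ a.zero_le (hlt a (by simp)) fun _ => List.rel_of_pairwise_cons hsorted,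
    Nat.sub_zero, trace_mul_comm, ← mul_assoc, trace_mul_vecMulVec,
    dotProduct_wordProd_mul_pow_mulVec D u v le_rfl hsorted hlt, cyclicGaps_cons]

theorem trace_add_vecMulVec_pow (n : ℕ) :
    trace ((D + vecMulVec u v) ^ n) =
      trace (D ^ n) + ∑ A : Finset (Fin n) with A.Nonempty,
        ((cyclicGaps n (sortedVals A)).map fun g => v ⬝ᵥ D ^ (g - 1) *ᵥ u).prod := by
  have hempty : ({A : Finset (Fin n) | ¬ A.Nonempty} : Finset (Finset (Fin n))) = {∅} := by
    ext A
    simp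
  rw [add_pow_eq_sum_wordProd, trace_sum, ← Finset.sum_filter_not_add_sum_filter _ Finset.Nonempty,
    hempty, Finset.sum_singleton, sortedVals_empty, wordProd_nil, Nat.sub_zero]
  refine congrArg _ (Finset.sum_congr rfl fun A hA => ?_)
  exact trace_wordProd_vecMulVec D u v (sortedVals_ne_nil (Finset.mem_filter.1 hA).2)
    (pairwise_sortedVals A) fun _ => lt_of_mem_sortedVals

end RankOne

section Diagonal

variable {ι R : Type*} [Fintype ι] [DecidableEq ι] [CommSemiring R] (x y : R) (u v : ι → R)

theorem dotProduct_smul_diagonal_pow_mulVec_smul {g : ℕ} (hg : 0 < g) :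
    v ⬝ᵥ (x • diagonal (u * v)) ^ (g - 1) *ᵥ (y • u) =
      y * x ^ (g - 1) * trace (diagonal (u * v) ^ g) := by
  obtain ⟨m, rfl⟩ := Nat.exists_eq_add_one.2 hg
  rw [Nat.add_sub_cancel, smul_pow, smul_mulVec, mulVec_smul, dotProduct_smul, dotProduct_smul,
    smul_smul, smul_eq_mul, mul_comm (x ^ m)]
  congr 1
  simp only [diagonal_pow, mulVec_diagonal, trace, dotProduct, diag_apply, diagonal_apply_eq,
    Pi.pow_apply, Pi.mul_apply]
  exact Finset.sum_congr rfl fun i _ => by ring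

theorem prod_map_cyclicGaps_dotProduct {n : ℕ} {A : Finset (Fin n)} (hA : A.Nonempty) :
    ((cyclicGaps n (sortedVals A)).map
        fun g => v ⬝ᵥ (x • diagonal (u * v)) ^ (g - 1) *ᵥ (y • u)).prod =
      x ^ (n - A.card) * y ^ A.card *
        ((cyclicGaps n (sortedVals A)).map fun g => trace (diagonal (u * v) ^ g)).prod := by
  have hpos : ∀ g ∈ cyclicGaps n (sortedVals A), 0 < g :=
    fun _ => pos_of_mem_cyclicGaps fun _ => lt_of_mem_sortedVals
  have hsum : (cyclicGaps n (sortedVals A)).sum = n :=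
    sum_cyclicGaps (sortedVals_ne_nil hA) (pairwise_sortedVals A) fun _ => lt_of_mem_sortedVals
  rw [List.map_congr_left fun g hg => dotProduct_smul_diagonal_pow_mulVec_smul x y u v (hpos g hg),
    prod_map_mul_pow_sub_one x y _ hpos, length_cyclicGaps, length_sortedVals, hsum]

theorem cyclic_gap_trace_identity_general (n : ℕ) :
    ∑ A : Finset (Fin n) with A.Nonempty, x ^ (n - A.card) * y ^ A.card *
        ((cyclicGaps n (sortedVals A)).map fun g => trace (diagonal (u * v) ^ g)).prod +
      x ^ n * trace (diagonal (u * v) ^ n) =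
      trace ((x • diagonal (u * v) + y • vecMulVec u v) ^ n) := by
  rw [← smul_vecMulVec, trace_add_vecMulVec_pow, smul_pow, trace_smul, smul_eq_mul, add_comm]
  refine congrArg _ (Finset.sum_congr rfl fun A hA => ?_)
  exact (prod_map_cyclicGaps_dotProduct x y u v (Finset.mem_filter.1 hA).2).symm

end Diagonal

theorem trace_pow_eq_sum_eigenvalues_pow {ι 𝕜 : Type*} [Fintype ι] [DecidableEq ι] [RCLike 𝕜]
    {A : Matrix ι ι 𝕜} (hA : A.IsHermitian) (n : ℕ) :
    trace (A ^ n) = ∑ i, (hA.eigenvalues i : 𝕜) ^ n := by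
  conv_lhs => rw [hA.spectral_theorem]
  rw [← map_pow, Unitary.conjStarAlgAut_apply, trace_mul_cycle]
  simp [diagonal_pow, trace]

theorem diagonal_mul_self_pow {ι R : Type*} [Fintype ι] [DecidableEq ι] [CommSemiring R]
    (w : ι → R) (m : ℕ) : diagonal (w * w) ^ m = diagonal w ^ (2 * m) := by
  rw [pow_mul, diagonal_pow w 2, sq]

section HSigma

variable {k : ℕ} (x y : ℝ) (w : Fin k → ℝ)

theorem sum_Svec_pow (n : ℕ) : ∑ i, Svec x y w i ^ n = trace (HSigma x y w ^ n) := by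
  rw [trace_pow_eq_sum_eigenvalues_pow (HSigma_isHermitian x y w)]
  exact (Fin.revPerm.trans (Tuple.sort (HSigma_isHermitian x y w).eigenvalues)).sum_comp
    fun i => (HSigma_isHermitian x y w).eigenvalues i ^ n

theorem HSigma_eq_smul_add_smul_vecMulVec :
    HSigma x y w = x • diagonal (w * w) + y • vecMulVec w w := by
  ext i j
  obtain rfl | hij := eq_or_ne i j
  · simp only [HSigma, of_apply, if_true, Matrix.add_apply, Matrix.smul_apply, diagonal_apply_eq,
      vecMulVec_apply, Pi.mul_apply, smul_eq_mul]
    ring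
  · simp [HSigma, vecMulVec_apply, hij, mul_assoc]

end HSigma

/-- **Combinatorial trace identity.**  For a real diagonal matrix `W = diag(w)`, reals `x, y`
and `p ≥ 1`,
`Σ_{∅≠A⊆[p]} x^{p−|A|} y^{|A|} ∏_i Tr[W^{2(a_{i+1}−a_i)}] = Σ_i s_i^p − x^p Tr[W^{2p}]`,
where `s = S(x,y;w)`. -/
theorem cyclic_gap_trace_identity
    (k p : ℕ) (hp : 1 ≤ p) (w : Fin k → ℝ) (x y : ℝ) :
    ∑ A ∈ Finset.univ.powerset.filter Finset.Nonempty,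
        x ^ (p - A.card) * y ^ A.card * cyclicGapProd p (Matrix.diagonal w) A =
      ∑ i, Svec x y w i ^ p - x ^ p * Matrix.trace (Matrix.diagonal w ^ (2 * p)) := by
  rw [eq_sub_iff_add_eq, sum_Svec_pow, HSigma_eq_smul_add_smul_vecMulVec,
    ← cyclic_gap_trace_identity_general, Finset.powerset_univ]
  simp only [cyclicGapProd_eq_prod_map_cyclicGaps, diagonal_mul_self_pow]
end

section
/- Fix n ≥ 1 and k ≥ 1, let U_1,…,U_k ∈ U(n) be arbitrary unitary matrices, let w_1,…,w_k ≥ 0 with Σ w_i = 1, and let ψ = Σ_{i,j=1}^n a_{ij} e_i ⊗ e_j ∈ C^n ⊗ C^n be a unit vector with coefficient matrix A = (a_{ij}). Then the largest eigenvalue of Z = Σ_{i,j=1}^k w_i w_j (U_i ⊗ conj(U_j)) ψψ^* (U_i ⊗ conj(U_j))^* satisfies λ_1(Z) ≥ (|Tr A|²/n) Σ_{i=1}^k w_i². -/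
open Matrix
open scoped BigOperators

/-- Eigenvalues of a matrix (junk value `0` if not Hermitian). -/
noncomputable def eigsOf {N : Type*} [Fintype N] [DecidableEq N] (M : Matrix N N ℂ) : N → ℝ :=
  if h : M.IsHermitian then h.eigenvalues else 0

/-- The output state `Z = [Φ ⊗ conj(Φ)](ψψ*) = Σ_{i,j} w_i w_j (U_i ⊗ conj(U_j)) ψψ*
(U_i ⊗ conj(U_j))^*`, where `ψ` has coefficient matrix `A`. -/
noncomputable def Zmat (n k : ℕ) (w : Fin k → ℝ)
    (U : Fin k → Matrix (Fin n) (Fin n) ℂ) (A : Matrix (Fin n) (Fin n) ℂ) :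
    Matrix (Fin n × Fin n) (Fin n × Fin n) ℂ :=
  Matrix.of fun ab cd => ∑ i, ∑ j, ((w i * w j : ℝ) : ℂ) *
    ((U i * A * (U j)ᴴ) ab.1 ab.2 * star ((U i * A * (U j)ᴴ) cd.1 cd.2))

/-!
Every `U ⊗ conj U` with `U` unitary fixes the Bell vector `φ`, and so does its adjoint. Hence in
`⟨φ, Z φ⟩ ≤ λ₁(Z)` the diagonal terms `i = j` each contribute the full overlap `|⟨φ, ψ⟩|²` with
weight `w_i ^ 2`, while the off-diagonal terms are nonnegative.
-/

open scoped ComplexOrder Kronecker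

section StarRing

variable {R M N : Type*} [NonUnitalSemiring R] [StarRing R] [Fintype N]

theorem mul_vecMulVec_star_mul_conjTranspose (K : Matrix M N R) (v : N → R) :
    K * vecMulVec v (star v) * Kᴴ = vecMulVec (K *ᵥ v) (star (K *ᵥ v)) := by
  rw [mul_vecMulVec, vecMulVec_mul, star_mulVec]

theorem star_dotProduct_mul_mul_conjTranspose_mulVec [Fintype M] (K : Matrix M N R)
    (ρ : Matrix N N R) (x : M → R) :
    star x ⬝ᵥ (K * ρ * Kᴴ) *ᵥ x = star (Kᴴ *ᵥ x) ⬝ᵥ ρ *ᵥ (Kᴴ *ᵥ x) := by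
  rw [star_mulVec, conjTranspose_conjTranspose, ← dotProduct_mulVec, mulVec_mulVec, mulVec_mulVec,
    Matrix.mul_assoc]

end StarRing

theorem re_dotProduct_vecMulVec_star_mulVec {𝕜 N : Type*} [RCLike 𝕜] [Fintype N]
    (v x : N → 𝕜) :
    RCLike.re (star x ⬝ᵥ vecMulVec v (star v) *ᵥ x) = ‖star x ⬝ᵥ v‖ ^ 2 := by
  rw [vecMulVec_mulVec, dotProduct_smul, star_dotProduct v x, op_smul_eq_mul, RCLike.star_def,
    RCLike.mul_conj]
  norm_cast

section Rayleigh

variable {𝕜 N : Type*} [RCLike 𝕜] [Fintype N] [DecidableEq N] {M : Matrix N N 𝕜}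

open scoped MatrixOrder in
theorem le_algebraMap_iSup_eigenvalues (hM : M.IsHermitian) :
    M ≤ algebraMap ℝ (Matrix N N 𝕜) (⨆ i, hM.eigenvalues i) := by
  refine le_algebraMap_of_spectrum_le (fun r hr ↦ ?_) hM
  rw [hM.spectrum_real_eq_range_eigenvalues] at hr
  obtain ⟨i, rfl⟩ := hr
  exact le_ciSup (Set.finite_range hM.eigenvalues).bddAbove i

theorem re_dotProduct_mulVec_le_iSup_eigenvalues_mul (hM : M.IsHermitian) (x : N → 𝕜) :
    RCLike.re (star x ⬝ᵥ M *ᵥ x) ≤ (⨆ i, hM.eigenvalues i) * RCLike.re (star x ⬝ᵥ x) := by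
  have h := (Matrix.le_iff.mp (le_algebraMap_iSup_eigenvalues hM)).re_dotProduct_nonneg x
  simpa [Algebra.algebraMap_eq_smul_one, sub_mulVec, smul_mulVec, RCLike.smul_re] using h

end Rayleigh

section KrausMap

variable {𝕜 M N κ : Type*} [RCLike 𝕜] [Fintype N] [Fintype κ]

/-- The completely positive map `ρ ↦ ∑ i, w i • K i ρ (K i)ᴴ` with Kraus operators `√(w i) • K i`;
the weights are kept apart from the operators so that a random unitary channel is the case of
unitary `K`. -/
def krausMap (w : κ → ℝ) (K : κ → Matrix M N 𝕜) (ρ : Matrix N N 𝕜) : Matrix M M 𝕜 :=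
  ∑ i, w i • (K i * ρ * (K i)ᴴ)

variable {w : κ → ℝ} {K : κ → Matrix M N 𝕜} {ρ : Matrix N N 𝕜}

theorem posSemidef_krausMap [Finite M] (hw : ∀ i, 0 ≤ w i) (hρ : ρ.PosSemidef) :
    (krausMap w K ρ).PosSemidef :=
  posSemidef_sum _ fun i _ ↦ (hρ.mul_mul_conjTranspose_same (K i)).smul (hw i)

theorem re_dotProduct_krausMap_mulVec [Fintype M] (x : M → 𝕜) :
    RCLike.re (star x ⬝ᵥ krausMap w K ρ *ᵥ x) =
      ∑ i, w i * RCLike.re (star ((K i)ᴴ *ᵥ x) ⬝ᵥ ρ *ᵥ ((K i)ᴴ *ᵥ x)) := by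
  simp only [krausMap, sum_mulVec, dotProduct_sum, map_sum, smul_mulVec, dotProduct_smul,
    RCLike.smul_re, star_dotProduct_mul_mul_conjTranspose_mulVec]

theorem sum_mul_re_dotProduct_le_krausMap [Fintype M] (hw : ∀ i, 0 ≤ w i) (hρ : ρ.PosSemidef)
    {x : M → 𝕜} {y : N → 𝕜} (s : Finset κ) (hs : ∀ i ∈ s, (K i)ᴴ *ᵥ x = y) :
    (∑ i ∈ s, w i) * RCLike.re (star y ⬝ᵥ ρ *ᵥ y) ≤
      RCLike.re (star x ⬝ᵥ krausMap w K ρ *ᵥ x) := by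
  rw [re_dotProduct_krausMap_mulVec, Finset.sum_mul]
  calc ∑ i ∈ s, w i * RCLike.re (star y ⬝ᵥ ρ *ᵥ y)
      = ∑ i ∈ s, w i * RCLike.re (star ((K i)ᴴ *ᵥ x) ⬝ᵥ ρ *ᵥ ((K i)ᴴ *ᵥ x)) :=
        Finset.sum_congr rfl fun i hi ↦ by rw [hs i hi]
    _ ≤ ∑ i, w i * RCLike.re (star ((K i)ᴴ *ᵥ x) ⬝ᵥ ρ *ᵥ ((K i)ᴴ *ᵥ x)) :=
        Finset.sum_le_univ_sum_of_nonneg fun i ↦ mul_nonneg (hw i) (hρ.re_dotProduct_nonneg _)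

end KrausMap

section PureState

variable {𝕜 m n : Type*} [RCLike 𝕜]

/-- The rank-one state `ψψ*` of the vector `ψ = ∑ i, ∑ j, A i j • e_i ⊗ e_j`. Since `vec` stacks
columns, `ψ` is `vec Aᵀ`. -/
def pureState (A : Matrix m n 𝕜) : Matrix (m × n) (m × n) 𝕜 :=
  vecMulVec (vec Aᵀ) (star (vec Aᵀ))

theorem posSemidef_pureState [Finite m] [Finite n] (A : Matrix m n 𝕜) :
    (pureState A).PosSemidef :=
  posSemidef_vecMulVec_self_star (vec Aᵀ)

end PureState

section BellVector

variable (𝕜 m : Type*) [RCLike 𝕜] [Fintype m] [DecidableEq m]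

/-- The Bell state `n^{-1/2} ∑ i, e_i ⊗ e_i`, as the vectorised identity matrix. -/
noncomputable def bellVector : m × m → 𝕜 :=
  (√(Fintype.card m))⁻¹ • vec (1 : Matrix m m 𝕜)

variable {𝕜 m}

theorem star_bellVector_dotProduct_vec (A : Matrix m m 𝕜) :
    star (bellVector 𝕜 m) ⬝ᵥ vec A = (√(Fintype.card m))⁻¹ • A.trace := by
  simp [bellVector, star_vec_dotProduct_vec]

theorem norm_sq_star_bellVector_dotProduct_vec (A : Matrix m m 𝕜) :
    ‖star (bellVector 𝕜 m) ⬝ᵥ vec A‖ ^ 2 = ‖A.trace‖ ^ 2 / Fintype.card m := by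
  rw [star_bellVector_dotProduct_vec, norm_smul, mul_pow, norm_inv, inv_pow, Real.norm_eq_abs,
    sq_abs, Real.sq_sqrt (Nat.cast_nonneg _), inv_mul_eq_div]

variable (𝕜 m) in
theorem star_bellVector_dotProduct_self [Nonempty m] :
    star (bellVector 𝕜 m) ⬝ᵥ bellVector 𝕜 m = 1 := by
  have hcard : (0 : ℝ) < Fintype.card m := mod_cast Fintype.card_pos
  nth_rewrite 2 [bellVector]
  rw [dotProduct_smul, star_bellVector_dotProduct_vec, smul_smul, ← mul_inv,
    Real.mul_self_sqrt hcard.le, trace_one, RCLike.real_smul_eq_coe_mul]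
  push_cast
  exact inv_mul_cancel₀ (mod_cast hcard.ne')

theorem conjTranspose_kronecker_map_star_mulVec_bellVector {U : Matrix m m 𝕜}
    (hU : U ∈ unitaryGroup m 𝕜) :
    (U ⊗ₖ U.map star)ᴴ *ᵥ bellVector 𝕜 m = bellVector 𝕜 m := by
  have hconj : (U.map star)ᴴ = Uᵀ := by
    ext
    simp
  have hcancel : (Uᴴ * U)ᵀ = 1 := by
    rw [← star_eq_conjTranspose, mem_unitaryGroup_iff'.mp hU, transpose_one]
  rw [bellVector, mulVec_smul, conjTranspose_kronecker, kronecker_mulVec_vec, hconj,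
    Matrix.mul_one, ← transpose_mul, hcancel]

theorem re_dotProduct_pureState_mulVec_bellVector (A : Matrix m m 𝕜) :
    RCLike.re (star (bellVector 𝕜 m) ⬝ᵥ pureState A *ᵥ bellVector 𝕜 m) =
      ‖A.trace‖ ^ 2 / Fintype.card m := by
  rw [pureState, re_dotProduct_vecMulVec_star_mulVec, norm_sq_star_bellVector_dotProduct_vec,
    trace_transpose]

end BellVector

section ConjProductChannel

variable {𝕜 m ι : Type*} [RCLike 𝕜] [Fintype m] [Fintype ι]

/-- The product channel `Φ ⊗ conj Φ` of `Φ ρ = ∑ i, w i • U i ρ (U i)ᴴ` with its entrywise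
complex conjugate, given by its Kraus operators `U i ⊗ conj (U j)`. -/
def conjProductChannel (w : ι → ℝ) (U : ι → Matrix m m 𝕜) :
    Matrix (m × m) (m × m) 𝕜 → Matrix (m × m) (m × m) 𝕜 :=
  krausMap (fun p : ι × ι ↦ w p.1 * w p.2) fun p ↦ U p.1 ⊗ₖ (U p.2).map star

theorem posSemidef_conjProductChannel {w : ι → ℝ} (hw : ∀ i, 0 ≤ w i) (U : ι → Matrix m m 𝕜)
    {ρ : Matrix (m × m) (m × m) 𝕜} (hρ : ρ.PosSemidef) :
    (conjProductChannel w U ρ).PosSemidef :=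
  posSemidef_krausMap (fun p ↦ mul_nonneg (hw p.1) (hw p.2)) hρ

variable [DecidableEq m] {w : ι → ℝ} {U : ι → Matrix m m 𝕜} {ρ : Matrix (m × m) (m × m) 𝕜}

theorem sum_sq_mul_re_dotProduct_bellVector_le (hw : ∀ i, 0 ≤ w i)
    (hU : ∀ i, U i ∈ unitaryGroup m 𝕜) (hρ : ρ.PosSemidef) :
    (∑ i, w i ^ 2) * RCLike.re (star (bellVector 𝕜 m) ⬝ᵥ ρ *ᵥ bellVector 𝕜 m) ≤
      RCLike.re (star (bellVector 𝕜 m) ⬝ᵥ conjProductChannel w U ρ *ᵥ bellVector 𝕜 m) := by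
  classical
  have hfix : ∀ p ∈ (Finset.univ : Finset ι).diag,
      (U p.1 ⊗ₖ (U p.2).map star)ᴴ *ᵥ bellVector 𝕜 m = bellVector 𝕜 m := by
    intro p hp
    rw [← (Finset.mem_diag.mp hp).2]
    exact conjTranspose_kronecker_map_star_mulVec_bellVector (hU p.1)
  simpa only [conjProductChannel, Finset.sum_diag, sq] using
    sum_mul_re_dotProduct_le_krausMap (fun p ↦ mul_nonneg (hw p.1) (hw p.2)) hρ _ hfix

theorem largest_eigenvalue_lower_bound_general [Nonempty m] (hw : ∀ i, 0 ≤ w i)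
    (hU : ∀ i, U i ∈ unitaryGroup m 𝕜) (hρ : ρ.PosSemidef) :
    (∑ i, w i ^ 2) * RCLike.re (star (bellVector 𝕜 m) ⬝ᵥ ρ *ᵥ bellVector 𝕜 m) ≤
      ⨆ p, (posSemidef_conjProductChannel hw U hρ).isHermitian.eigenvalues p := by
  refine (sum_sq_mul_re_dotProduct_bellVector_le hw hU hρ).trans ?_
  simpa only [star_bellVector_dotProduct_self, RCLike.one_re, mul_one] using
    re_dotProduct_mulVec_le_iSup_eigenvalues_mul
      (posSemidef_conjProductChannel hw U hρ).isHermitian (bellVector 𝕜 m)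

end ConjProductChannel

theorem eigsOf_of_isHermitian {N : Type*} [Fintype N] [DecidableEq N] {M : Matrix N N ℂ}
    (hM : M.IsHermitian) : eigsOf M = hM.eigenvalues :=
  dif_pos hM

theorem Zmat_eq_conjProductChannel (n k : ℕ) (w : Fin k → ℝ) (U : Fin k → Matrix (Fin n) (Fin n) ℂ)
    (A : Matrix (Fin n) (Fin n) ℂ) :
    Zmat n k w U A = conjProductChannel w U (pureState A) := by
  have hvec (i j : Fin k) : (U i ⊗ₖ (U j).map star) *ᵥ vec Aᵀ = vec (U i * A * (U j)ᴴ)ᵀ := by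
    rw [kronecker_mulVec_vec, transpose_mul, transpose_mul, Matrix.mul_assoc]
    rfl
  ext a b
  simp only [Zmat, of_apply, conjProductChannel, krausMap, pureState, Fintype.sum_prod_type,
    mul_vecMulVec_star_mul_conjTranspose, hvec, Matrix.sum_apply, Matrix.smul_apply,
    vecMulVec_apply, Pi.star_apply, vec, transpose_apply, Complex.real_smul]

/-- **Hayden–Winter trick for random unitary channels** (deterministic, fixed dimension).
For any unitaries `U_1, …, U_k ∈ U(n)`, any weights `w_i ≥ 0` with `Σ w_i = 1` and any unit
vector `ψ` with coefficient matrix `A`, the largest eigenvalue of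
`Z = [Φ ⊗ conj(Φ)](ψψ*)` satisfies `λ₁(Z) ≥ (|Tr A|²/n) Σ_i w_i²`. -/
theorem largest_eigenvalue_lower_bound
    (n k : ℕ) (hn : 0 < n) (hk : 0 < k)
    (U : Fin k → Matrix.unitaryGroup (Fin n) ℂ)
    (w : Fin k → ℝ) (hw0 : ∀ i, 0 ≤ w i) (hw1 : ∑ i, w i = 1)
    (A : Matrix (Fin n) (Fin n) ℂ) (hA : (A * Aᴴ).trace = 1) :
    ‖A.trace‖ ^ 2 / n * ∑ i, w i ^ 2 ≤
      ⨆ ij : Fin n × Fin n,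
        eigsOf (Zmat n k w (fun i => (U i : Matrix (Fin n) (Fin n) ℂ)) A) ij := by
  have : Nonempty (Fin n) := Fin.pos_iff_nonempty.mp hn
  have hψ := posSemidef_pureState A
  simpa only [Zmat_eq_conjProductChannel, re_dotProduct_pureState_mulVec_bellVector,
    eigsOf_of_isHermitian (posSemidef_conjProductChannel hw0 _ hψ).isHermitian,
    Fintype.card_fin, mul_comm] using
    largest_eigenvalue_lower_bound_general hw0 (fun i ↦ (U i).2) hψ
end

section
/- Fix p ≥ 2 and identify {1,…,2p} with {1^T,…,p^T, 1^B,…,p^B}. Define γ, δ ∈ S_{2p} by γ(i^T) = (i−1)^T and γ(i^B) = (i+1)^B (indices modulo p), and δ(i^T) = i^B, δ(i^B) = i^T for all i. Then for every permutation β ∈ S_{2p}, |γ^{-1}β| + |β^{-1}δ| + |β| ≥ 2p, where |σ| = 2p − #σ and #σ is the number of cycles of σ. Equality holds if and only if β ∈ {id, δ, γ} when p = 2, and if and only if β = δ when p ≥ 3. -/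
open Equiv
open scoped BigOperators

/-- number of cycles (including fixed points) of a permutation -/
def numCycles {α : Type*} [Fintype α] [DecidableEq α] (σ : Equiv.Perm α) : ℕ :=
  σ.cycleType.card + (Fintype.card α - σ.cycleType.sum)

/-- the length `|σ|` of a permutation: the minimal number of transpositions whose product
is `σ`, i.e. (cardinality of the underlying set) − (number of cycles of `σ`). -/
def lengthPerm {α : Type*} [Fintype α] [DecidableEq α] (σ : Equiv.Perm α) : ℕ :=
  Fintype.card α - numCycles σ

/-- The wiring permutation `γ ∈ S_{2p}` on `{1ᵀ,…,pᵀ, 1ᴮ,…,pᴮ}` (encoded as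
`Fin p ⊕ Fin p`, `inl` = top, `inr` = bottom): `γ(iᵀ) = (i−1)ᵀ`, `γ(iᴮ) = (i+1)ᴮ`. -/
def gammaPerm (p : ℕ) : Equiv.Perm (Fin p ⊕ Fin p) :=
  Equiv.sumCongr (finRotate p)⁻¹ (finRotate p)

/-- The wiring permutation `δ ∈ S_{2p}`: `δ(iᵀ) = iᴮ`, `δ(iᴮ) = iᵀ`. -/
def deltaPerm (p : ℕ) : Equiv.Perm (Fin p ⊕ Fin p) :=
  Equiv.sumComm (Fin p) (Fin p)

/-!
The length `|σ|` is the codimension of the space of functions invariant under `σ`. A function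
invariant under `σ` and `τ` is invariant under `σ * τ`, so the distance `d σ τ = |σ⁻¹ * τ|`
satisfies the triangle inequality; if `β` lies on a geodesic from `ρ` to `τ`, then comparing
dimensions shows that `ρ⁻¹ * β` maps each cycle of `ρ⁻¹ * τ` to itself.

Now `δ` and `γ⁻¹ * δ` are involutions exchanging top and bottom, while `γ` preserves both and acts
on each as a `p`-cycle, so `d 1 δ = d γ δ = p` and `d 1 γ = 2 * p - 2`. Adding the three triangle
inequalities through `β` bounds the sum of the distances from `β` to `1`, `γ`, `δ` below by
`2 * p - 1`. A cycle of `δ` meets a cycle of `γ` in at most one point, so only `β = 1` lies both on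
a geodesic from `1` to `γ` and on one from `1` to `δ`; the same argument applies with `γ` in the
role of `1`. This excludes the value `2 * p - 1` and, since the length determines the sign, leaves
only `β = δ`, `β = 1` and `β = γ` for the value `2 * p`, the last two having the sum `3 * p - 2`.
-/

section

open Equiv.Perm

variable {α β κ : Type*}

section Cycles

theorem eq_of_sameCycle {σ : Perm α} {f : α → κ} (hf : ∀ x, f (σ x) = f x) {x y : α}
    (h : σ.SameCycle x y) : f x = f y := by
  obtain ⟨i, rfl⟩ := h
  have hf_inv (z : α) : f (σ⁻¹ z) = f z := by
    rw [← hf (σ⁻¹ z), coe_inv, apply_symm_apply]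
  refine (zpow_induction_left (P := fun τ : Perm α ↦ f (τ x) = f x) (g := σ) rfl ?_ ?_ i).symm
  · exact fun τ hτ ↦ (hf (τ x)).trans hτ
  · exact fun τ hτ ↦ (hf_inv (τ x)).trans hτ

theorem eq_or_eq_apply_of_sameCycle_of_sq_eq_one {σ : Perm α} (hσ : σ ^ 2 = 1) {x y : α}
    (h : σ.SameCycle x y) : y = x ∨ y = σ x := by
  have hσσ (z : α) : σ (σ z) = z := by rw [← mul_apply, ← sq, hσ, one_apply]
  have horbit : s(x, σ x) = s(y, σ y) :=
    eq_of_sameCycle (f := fun z ↦ s(z, σ z)) (fun z ↦ by rw [hσσ, Sym2.eq_swap]) h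
  rcases Sym2.eq_iff.mp horbit with ⟨hxy, -⟩ | ⟨-, hxy⟩
  exacts [Or.inl hxy.symm, Or.inr hxy.symm]

theorem eq_of_sameCycle_of_sameCycle {π ρ : Perm α} {side : α → κ} (hπ : π ^ 2 = 1)
    (hπ_side : ∀ x, side (π x) ≠ side x) (hρ_side : ∀ x, side (ρ x) = side x) {x y : α}
    (hxyπ : π.SameCycle x y) (hxyρ : ρ.SameCycle x y) : y = x :=
  (eq_or_eq_apply_of_sameCycle_of_sq_eq_one hπ hxyπ).resolve_right fun hy ↦
    hπ_side x (hy ▸ (eq_of_sameCycle hρ_side hxyρ).symm)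

variable [Fintype α] [DecidableEq α]

/-- The cycle of `σ` through `x`, where a fixed point stands for its own cycle of length one
(`cycleFactorsFinset` contains only the nontrivial cycles). -/
def cycleThrough (σ : Perm α) (x : α) : σ.cycleFactorsFinset ⊕ Function.fixedPoints σ :=
  if hx : σ x = x then Sum.inr ⟨x, hx⟩
  else Sum.inl ⟨σ.cycleOf x, cycleOf_mem_cycleFactorsFinset_iff.mpr (mem_support.mpr hx)⟩

theorem cycleThrough_surjective (σ : Perm α) : Function.Surjective (cycleThrough σ) := by
  rintro (⟨c, hc⟩ | ⟨x, hx⟩)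
  · obtain ⟨x, hx, -⟩ := (mem_cycleFactorsFinset_iff.mp hc).1
    have hcx : c = σ.cycleOf x := cycle_is_cycleOf (mem_support.mpr hx) hc
    have hσx : σ x ≠ x := by rwa [hcx, cycleOf_apply_self] at hx
    exact ⟨x, by simp only [cycleThrough, hσx, dite_false, hcx]⟩
  · exact ⟨x, dif_pos hx⟩

theorem cycleThrough_eq_iff {σ : Perm α} {x y : α} :
    cycleThrough σ x = cycleThrough σ y ↔ σ.SameCycle x y := by
  constructor
  · intro h
    by_cases hx : σ x = x <;> by_cases hy : σ y = y <;>
      simp only [cycleThrough, hx, hy, dite_true, dite_false, reduceCtorEq, Sum.inl.injEq,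
        Sum.inr.injEq] at h
    · exact Subtype.mk.inj h ▸ SameCycle.refl σ x
    · exact (sameCycle_iff_cycleOf_eq_of_mem_support (mem_support.mpr hx)
        (mem_support.mpr hy)).mpr (Subtype.mk.inj h)
  · intro h
    by_cases hx : σ x = x
    · rw [h.eq_of_left hx]
    · have hy : σ y ≠ y := fun hy ↦ hx (h.apply_eq_self_iff.mpr hy)
      simp only [cycleThrough, hx, hy, dite_false, h.cycleOf_eq]

theorem numCycles_eq_card (σ : Perm α) :
    numCycles σ = Fintype.card (σ.cycleFactorsFinset ⊕ Function.fixedPoints σ) := by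
  rw [Fintype.card_sum, card_fixedPoints, Fintype.card_coe, numCycles, cycleType_def,
    Multiset.card_map, Finset.card_val]

end Cycles

section InvariantFunctions

/-- The rational functions on `α` that are invariant under `σ`. They are the functions constant on
the cycles of `σ`, so they form a space of dimension `numCycles σ`. -/
def invariantFunctions (σ : Perm α) : Submodule ℚ (α → ℚ) :=
  LinearMap.eqLocus (LinearMap.funLeft ℚ ℚ σ) LinearMap.id

theorem mem_invariantFunctions {σ : Perm α} {f : α → ℚ} :
    f ∈ invariantFunctions σ ↔ ∀ x, f (σ x) = f x :=
  funext_iff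

theorem invariantFunctions_inf_le_mul (σ τ : Perm α) :
    invariantFunctions σ ⊓ invariantFunctions τ ≤ invariantFunctions (σ * τ) := by
  rintro f ⟨hσ, hτ⟩
  rw [SetLike.mem_coe, mem_invariantFunctions] at hσ hτ
  exact mem_invariantFunctions.mpr fun x ↦ by rw [mul_apply, hσ, hτ]

theorem sameCycle_apply_of_invariantFunctions_le {σ τ : Perm α}
    (h : invariantFunctions τ ≤ invariantFunctions σ) (x : α) : τ.SameCycle x (σ x) := by
  classical
  let cycleIndicator : α → ℚ := fun y ↦ if τ.SameCycle x y then 1 else 0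
  have hτ : cycleIndicator ∈ invariantFunctions τ :=
    mem_invariantFunctions.mpr fun y ↦ by simp only [cycleIndicator, sameCycle_apply_right]
  have hσ : cycleIndicator (σ x) = cycleIndicator x := mem_invariantFunctions.mp (h hτ) x
  by_contra hx
  simp [cycleIndicator, hx, SameCycle.refl] at hσ

variable [Fintype α] [DecidableEq α]

theorem invariantFunctions_eq_range (σ : Perm α) :
    invariantFunctions σ = LinearMap.range (LinearMap.funLeft ℚ ℚ (cycleThrough σ)) := by
  ext f
  rw [mem_invariantFunctions]
  constructor
  · intro hf
    have hfactors : f.FactorsThrough (cycleThrough σ) := fun x y hxy ↦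
      eq_of_sameCycle hf (cycleThrough_eq_iff.mp hxy)
    obtain ⟨g, rfl⟩ := (Function.factorsThrough_iff f).mp hfactors
    exact ⟨g, rfl⟩
  · rintro ⟨g, rfl⟩ x
    exact congrArg g (cycleThrough_eq_iff.mpr (sameCycle_apply_left.mpr (SameCycle.refl σ x)))

theorem finrank_invariantFunctions (σ : Perm α) :
    Module.finrank ℚ (invariantFunctions σ) = numCycles σ := by
  rw [invariantFunctions_eq_range, LinearMap.finrank_range_of_inj
    (LinearMap.funLeft_injective_of_surjective ℚ ℚ _ (cycleThrough_surjective σ)),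
    Module.finrank_fintype_fun_eq_card, numCycles_eq_card]

end InvariantFunctions

section Length

variable [Fintype α] [DecidableEq α]

theorem lengthPerm_add_card_cycleType (σ : Perm α) :
    lengthPerm σ + σ.cycleType.card = σ.cycleType.sum := by
  have hsum : σ.cycleType.sum ≤ Fintype.card α := sum_cycleType_le σ
  have hcard : σ.cycleType.card ≤ σ.cycleType.sum := by
    simpa using Multiset.card_nsmul_le_sum fun n hn ↦ (one_lt_of_mem_cycleType hn).le
  unfold lengthPerm numCycles
  omega

theorem lengthPerm_add_finrank (σ : Perm α) :
    lengthPerm σ + Module.finrank ℚ (invariantFunctions σ) = Fintype.card α := by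
  have hle := Submodule.finrank_le (invariantFunctions σ)
  rw [Module.finrank_fintype_fun_eq_card] at hle
  rw [lengthPerm, ← finrank_invariantFunctions, Nat.sub_add_cancel hle]

@[simp]
theorem lengthPerm_one : lengthPerm (1 : Perm α) = 0 := by
  simpa using lengthPerm_add_card_cycleType (1 : Perm α)

theorem lengthPerm_inv (σ : Perm α) : lengthPerm σ⁻¹ = lengthPerm σ := by
  simp only [lengthPerm, numCycles, cycleType_inv]

theorem lengthPerm_eq_zero_iff {σ : Perm α} : lengthPerm σ = 0 ↔ σ = 1 := by
  refine ⟨fun h ↦ ?_, fun h ↦ h ▸ lengthPerm_one⟩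
  have hcard := lengthPerm_add_card_cycleType σ
  have htwo : σ.cycleType.card * 2 ≤ σ.cycleType.sum :=
    Multiset.card_nsmul_le_sum fun n hn ↦ two_le_of_mem_cycleType hn
  exact card_cycleType_eq_zero.mp (by omega)

theorem sign_eq_neg_one_pow_lengthPerm (σ : Perm α) : sign σ = (-1) ^ lengthPerm σ := by
  rw [sign_of_cycleType, ← lengthPerm_add_card_cycleType, add_assoc, ← two_mul, pow_add, pow_mul,
    Int.units_sq, one_pow, mul_one]

theorem even_lengthPerm_mul_iff (σ τ : Perm α) :
    Even (lengthPerm (σ * τ)) ↔ Even (lengthPerm σ + lengthPerm τ) := by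
  have hne : (-1 : ℤˣ) ≠ 1 := by decide
  rw [← neg_one_pow_eq_one_iff_even hne, ← neg_one_pow_eq_one_iff_even hne, pow_add]
  simp only [← sign_eq_neg_one_pow_lengthPerm, Perm.sign_mul]

theorem lengthPerm_mul_add_finrank_le (σ τ : Perm α) :
    lengthPerm (σ * τ) + Module.finrank ℚ (invariantFunctions (σ * τ)) ≤
      lengthPerm σ + lengthPerm τ +
        Module.finrank ℚ ↥(invariantFunctions σ ⊓ invariantFunctions τ) := by
  have hdim := Submodule.finrank_sup_add_finrank_inf_eq (invariantFunctions σ)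
    (invariantFunctions τ)
  have hsup := Submodule.finrank_le (invariantFunctions σ ⊔ invariantFunctions τ)
  rw [Module.finrank_fintype_fun_eq_card] at hsup
  have hσ := lengthPerm_add_finrank σ
  have hτ := lengthPerm_add_finrank τ
  have hστ := lengthPerm_add_finrank (σ * τ)
  omega

theorem lengthPerm_mul_le (σ τ : Perm α) :
    lengthPerm (σ * τ) ≤ lengthPerm σ + lengthPerm τ := by
  have hle := lengthPerm_mul_add_finrank_le σ τ
  have hmono := Submodule.finrank_mono (invariantFunctions_inf_le_mul σ τ)
  omega

theorem sameCycle_mul_apply_of_lengthPerm_mul_eq {σ τ : Perm α}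
    (h : lengthPerm σ + lengthPerm τ = lengthPerm (σ * τ)) (x : α) :
    (σ * τ).SameCycle x (σ x) := by
  have hle := lengthPerm_mul_add_finrank_le σ τ
  have hinf : invariantFunctions σ ⊓ invariantFunctions τ = invariantFunctions (σ * τ) :=
    Submodule.eq_of_le_of_finrank_le (invariantFunctions_inf_le_mul σ τ) (by omega)
  exact sameCycle_apply_of_invariantFunctions_le (hinf ▸ inf_le_left) x

theorem two_mul_lengthPerm_of_sq_eq_one {σ : Perm α} (hσ : σ ^ 2 = 1) (hfix : ∀ x, σ x ≠ x) :
    2 * lengthPerm σ = Fintype.card α := by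
  have hsupport : σ.support = Finset.univ := Finset.eq_univ_of_forall fun x ↦
    mem_support.mpr (hfix x)
  have hsum : σ.cycleType.sum = Fintype.card α := by
    rw [sum_cycleType, hsupport, Finset.card_univ]
  have hcard : σ.cycleType.sum = σ.cycleType.card * 2 := by
    conv_lhs => rw [cycleType_of_pow_prime_eq_one hσ]
    rw [Multiset.sum_replicate, smul_eq_mul]
  have hlength := lengthPerm_add_card_cycleType σ
  omega

theorem lengthPerm_of_sq_eq_one_of_isLeft_ne {π : Perm (α ⊕ α)} (hsq : π ^ 2 = 1)
    (hside : ∀ x, (π x).isLeft ≠ x.isLeft) : lengthPerm π = Fintype.card α := by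
  have htwo := two_mul_lengthPerm_of_sq_eq_one hsq fun x hx ↦ hside x (congrArg Sum.isLeft hx)
  rw [Fintype.card_sum] at htwo
  omega

end Length

section Distance

variable [Fintype α] [DecidableEq α]

/-- The left-invariant metric attached to the length: the distance between two permutations in the
Cayley graph generated by all transpositions. -/
def permDist (σ τ : Perm α) : ℕ := lengthPerm (σ⁻¹ * τ)

@[simp]
theorem permDist_one_left (σ : Perm α) : permDist 1 σ = lengthPerm σ := by
  rw [permDist, inv_one, one_mul]

@[simp]
theorem permDist_self (σ : Perm α) : permDist σ σ = 0 := by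
  rw [permDist, inv_mul_cancel, lengthPerm_one]

theorem permDist_eq_zero_iff {σ τ : Perm α} : permDist σ τ = 0 ↔ σ = τ := by
  rw [permDist, lengthPerm_eq_zero_iff, inv_mul_eq_one]

theorem permDist_comm (σ τ : Perm α) : permDist σ τ = permDist τ σ := by
  rw [permDist, ← lengthPerm_inv, mul_inv_rev, inv_inv, permDist]

theorem permDist_triangle (ρ σ τ : Perm α) : permDist ρ τ ≤ permDist ρ σ + permDist σ τ := by
  simpa only [permDist, mul_assoc, mul_inv_cancel_left] using
    lengthPerm_mul_le (ρ⁻¹ * σ) (σ⁻¹ * τ)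

theorem even_permDist_iff (ρ σ τ : Perm α) :
    Even (permDist ρ τ) ↔ Even (permDist ρ σ + permDist σ τ) := by
  simpa only [permDist, mul_assoc, mul_inv_cancel_left] using
    even_lengthPerm_mul_iff (ρ⁻¹ * σ) (σ⁻¹ * τ)

theorem sameCycle_of_permDist_add_eq {ρ σ τ : Perm α}
    (h : permDist ρ σ + permDist σ τ = permDist ρ τ) (x : α) :
    (ρ⁻¹ * τ).SameCycle x ((ρ⁻¹ * σ) x) := by
  have hmul : ρ⁻¹ * σ * (σ⁻¹ * τ) = ρ⁻¹ * τ := by group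
  rw [← hmul]
  exact sameCycle_mul_apply_of_lengthPerm_mul_eq (by rw [hmul]; exact h) x

theorem eq_left_of_permDist_add_eq {ρ σ τ τ' : Perm α} {side : α → κ} (hsq : (ρ⁻¹ * τ) ^ 2 = 1)
    (hside : ∀ x, side ((ρ⁻¹ * τ) x) ≠ side x) (hside' : ∀ x, side ((ρ⁻¹ * τ') x) = side x)
    (h : permDist ρ σ + permDist σ τ = permDist ρ τ)
    (h' : permDist ρ σ + permDist σ τ' = permDist ρ τ') : σ = ρ := by
  have hone : ρ⁻¹ * σ = 1 := Perm.ext fun x ↦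
    eq_of_sameCycle_of_sameCycle hsq hside hside' (sameCycle_of_permDist_add_eq h x)
      (sameCycle_of_permDist_add_eq h' x)
  exact (inv_mul_eq_one.mp hone).symm

end Distance

section SumCongr

variable [Fintype α] [DecidableEq α] [Fintype β] [DecidableEq β]

theorem cycleType_sumCongr_one (σ : Perm α) :
    (Perm.sumCongr σ (1 : Perm β)).cycleType = σ.cycleType := by
  have hextend : Perm.sumCongr σ (1 : Perm β) =
      σ.extendDomain (Equiv.ofInjective _ Sum.inl_injective) := by
    ext (x | y)
    · exact (extendDomain_apply_image σ (Equiv.ofInjective _ Sum.inl_injective) x).symm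
    · exact (extendDomain_apply_not_subtype σ _ (by simp)).symm
  rw [hextend, cycleType_extendDomain]

theorem cycleType_one_sumCongr (τ : Perm β) :
    (Perm.sumCongr (1 : Perm α) τ).cycleType = τ.cycleType := by
  have hextend : Perm.sumCongr (1 : Perm α) τ =
      τ.extendDomain (Equiv.ofInjective _ Sum.inr_injective) := by
    ext (x | y)
    · exact (extendDomain_apply_not_subtype τ _ (by simp)).symm
    · exact (extendDomain_apply_image τ (Equiv.ofInjective _ Sum.inr_injective) y).symm
  rw [hextend, cycleType_extendDomain]

theorem cycleType_sumCongr (σ : Perm α) (τ : Perm β) :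
    (Perm.sumCongr σ τ).cycleType = σ.cycleType + τ.cycleType := by
  have hdisjoint : (Perm.sumCongr σ (1 : Perm β)).Disjoint (Perm.sumCongr (1 : Perm α) τ) := by
    rintro (x | y)
    exacts [Or.inr rfl, Or.inl rfl]
  rw [← cycleType_sumCongr_one (β := β) σ, ← cycleType_one_sumCongr (α := α) τ,
    ← hdisjoint.cycleType_mul, sumCongr_mul, mul_one, one_mul]

end SumCongr

section Wiring

variable (p : ℕ)

theorem isLeft_gammaPerm (x : Fin p ⊕ Fin p) : (gammaPerm p x).isLeft = x.isLeft := by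
  cases x <;> rfl

theorem isLeft_gammaPerm_inv (x : Fin p ⊕ Fin p) : ((gammaPerm p)⁻¹ x).isLeft = x.isLeft := by
  rw [← isLeft_gammaPerm, coe_inv, apply_symm_apply]

theorem isLeft_deltaPerm_ne (x : Fin p ⊕ Fin p) : (deltaPerm p x).isLeft ≠ x.isLeft := by
  cases x <;> exact Bool.noConfusion

theorem isLeft_gammaPerm_inv_mul_deltaPerm_ne (x : Fin p ⊕ Fin p) :
    (((gammaPerm p)⁻¹ * deltaPerm p) x).isLeft ≠ x.isLeft := by
  rw [mul_apply, isLeft_gammaPerm_inv]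
  exact isLeft_deltaPerm_ne p x

theorem deltaPerm_sq : deltaPerm p ^ 2 = 1 := by
  ext (i | i) <;> rfl

theorem gammaPerm_mul_deltaPerm_mul_gammaPerm :
    gammaPerm p * deltaPerm p * gammaPerm p = deltaPerm p := by
  ext (i | i)
  · exact congrArg Sum.inr ((finRotate p).apply_symm_apply i)
  · exact congrArg Sum.inl ((finRotate p).symm_apply_apply i)

theorem gammaPerm_inv_mul_deltaPerm_sq : ((gammaPerm p)⁻¹ * deltaPerm p) ^ 2 = 1 := by
  have hconj : deltaPerm p * (gammaPerm p)⁻¹ = gammaPerm p * deltaPerm p :=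
    mul_inv_eq_of_eq_mul (gammaPerm_mul_deltaPerm_mul_gammaPerm p).symm
  rw [sq, mul_assoc, ← mul_assoc (deltaPerm p), hconj, mul_assoc, inv_mul_cancel_left, ← sq,
    deltaPerm_sq]

theorem permDist_one_deltaPerm : permDist 1 (deltaPerm p) = p := by
  rw [permDist_one_left, lengthPerm_of_sq_eq_one_of_isLeft_ne (deltaPerm_sq p)
    (isLeft_deltaPerm_ne p), Fintype.card_fin]

theorem permDist_gammaPerm_deltaPerm : permDist (gammaPerm p) (deltaPerm p) = p := by
  rw [permDist, lengthPerm_of_sq_eq_one_of_isLeft_ne (gammaPerm_inv_mul_deltaPerm_sq p)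
    (isLeft_gammaPerm_inv_mul_deltaPerm_ne p), Fintype.card_fin]

variable {p : ℕ}

theorem permDist_one_gammaPerm_add_two (hp : 2 ≤ p) :
    permDist 1 (gammaPerm p) + 2 = 2 * p := by
  have hcycles : (gammaPerm p).cycleType = {p} + {p} := by
    rw [gammaPerm, ← Perm.sumCongr, cycleType_sumCongr, cycleType_inv,
      cycleType_finRotate_of_le hp]
  have hlength := lengthPerm_add_card_cycleType (gammaPerm p)
  rw [hcycles, ← permDist_one_left] at hlength
  simp only [Multiset.card_add, Multiset.card_singleton, Multiset.sum_add,
    Multiset.sum_singleton] at hlength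
  omega

variable {σ : Perm (Fin p ⊕ Fin p)}

theorem eq_one_of_permDist_add_eq
    (hδ : permDist 1 σ + permDist σ (deltaPerm p) = permDist 1 (deltaPerm p))
    (hγ : permDist 1 σ + permDist σ (gammaPerm p) = permDist 1 (gammaPerm p)) : σ = 1 :=
  eq_left_of_permDist_add_eq (side := Sum.isLeft) (by rw [inv_one, one_mul, deltaPerm_sq])
    (by rw [inv_one, one_mul]; exact isLeft_deltaPerm_ne p)
    (by rw [inv_one, one_mul]; exact isLeft_gammaPerm p) hδ hγ

theorem eq_gammaPerm_of_permDist_add_eq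
    (hδ : permDist (gammaPerm p) σ + permDist σ (deltaPerm p) =
      permDist (gammaPerm p) (deltaPerm p))
    (hone : permDist (gammaPerm p) σ + permDist σ 1 = permDist (gammaPerm p) 1) :
    σ = gammaPerm p :=
  eq_left_of_permDist_add_eq (side := Sum.isLeft) (gammaPerm_inv_mul_deltaPerm_sq p)
    (isLeft_gammaPerm_inv_mul_deltaPerm_ne p)
    (by rw [mul_one]; exact isLeft_gammaPerm_inv p) hδ hone

theorem two_mul_le_permDist_add (hp : 2 ≤ p) (σ : Perm (Fin p ⊕ Fin p)) :
    2 * p ≤ permDist (gammaPerm p) σ + permDist σ (deltaPerm p) + permDist 1 σ := by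
  have h1δ := permDist_one_deltaPerm p
  have hγδ := permDist_gammaPerm_deltaPerm p
  have h1γ := permDist_one_gammaPerm_add_two hp
  have triangle_1δ := permDist_triangle 1 σ (deltaPerm p)
  have triangle_γδ := permDist_triangle (gammaPerm p) σ (deltaPerm p)
  have triangle_1γ := permDist_triangle 1 σ (gammaPerm p)
  rw [permDist_comm σ (gammaPerm p)] at triangle_1γ
  by_contra hlt
  have hσ : σ = 1 :=
    eq_one_of_permDist_add_eq (by omega) (by rw [permDist_comm σ (gammaPerm p)]; omega)
  subst hσ
  omega

theorem eq_of_permDist_add_eq_two_mul (hp : 2 ≤ p)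
    (h : permDist (gammaPerm p) σ + permDist σ (deltaPerm p) + permDist 1 σ = 2 * p) :
    σ = deltaPerm p ∨ p = 2 ∧ (σ = 1 ∨ σ = gammaPerm p) := by
  have h1δ := permDist_one_deltaPerm p
  have hγδ := permDist_gammaPerm_deltaPerm p
  have h1γ := permDist_one_gammaPerm_add_two hp
  have triangle_1δ := permDist_triangle 1 σ (deltaPerm p)
  have triangle_γδ := permDist_triangle (gammaPerm p) σ (deltaPerm p)
  have triangle_1γ := permDist_triangle 1 σ (gammaPerm p)
  have even_1δ := even_permDist_iff 1 σ (deltaPerm p)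
  have even_1γ := even_permDist_iff 1 σ (gammaPerm p)
  rw [permDist_comm σ (gammaPerm p)] at triangle_1γ even_1γ
  rw [Nat.even_iff, Nat.even_iff] at even_1δ even_1γ
  by_cases hσδ : permDist σ (deltaPerm p) = 0
  · exact Or.inl (permDist_eq_zero_iff.mp hσδ)
  have tight_1γ : permDist 1 σ + permDist (gammaPerm p) σ = permDist 1 (gammaPerm p) := by omega
  right
  -- Now `permDist σ (deltaPerm p) = 2`, so the excesses of these two sums over `p` add up to `2`,
  -- and each of them is even.
  obtain tight_1δ | tight_γδ : permDist 1 σ + permDist σ (deltaPerm p) = p ∨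
      permDist (gammaPerm p) σ + permDist σ (deltaPerm p) = p := by omega
  · have hσ : σ = 1 :=
      eq_one_of_permDist_add_eq (by omega) (by rw [permDist_comm σ (gammaPerm p)]; omega)
    subst hσ
    exact ⟨by omega, Or.inl rfl⟩
  · have hσ : σ = gammaPerm p := eq_gammaPerm_of_permDist_add_eq (by omega)
      (by rw [permDist_comm σ 1, permDist_comm (gammaPerm p) 1]; omega)
    subst hσ
    exact ⟨by omega, Or.inr rfl⟩

theorem permDist_add_eq_two_mul_iff (hp : 2 ≤ p) :
    permDist (gammaPerm p) σ + permDist σ (deltaPerm p) + permDist 1 σ = 2 * p ↔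
      σ = deltaPerm p ∨ p = 2 ∧ (σ = 1 ∨ σ = gammaPerm p) := by
  refine ⟨eq_of_permDist_add_eq_two_mul hp, fun hσ ↦ ?_⟩
  have h1δ := permDist_one_deltaPerm p
  have hγδ := permDist_gammaPerm_deltaPerm p
  have h1γ := permDist_one_gammaPerm_add_two hp
  rcases hσ with rfl | ⟨hp2, rfl | rfl⟩
  · rw [permDist_self]
    omega
  · rw [permDist_self, permDist_comm]
    omega
  · rw [permDist_self]
    omega

end Wiring

end

/-- **The geodesic inequality** `|γ⁻¹β| + |β⁻¹δ| + |β| ≥ 2p`, for every `β ∈ S_{2p}`, with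
equality iff `β ∈ {id, δ, γ}` when `p = 2` and iff `β = δ` when `p ≥ 3`. -/
theorem geodesic_inequality (p : ℕ) (hp : 2 ≤ p) (β : Equiv.Perm (Fin p ⊕ Fin p)) :
    2 * p ≤ lengthPerm ((gammaPerm p)⁻¹ * β) + lengthPerm (β⁻¹ * deltaPerm p) +
      lengthPerm β ∧
    (p = 2 →
      (lengthPerm ((gammaPerm p)⁻¹ * β) + lengthPerm (β⁻¹ * deltaPerm p) +
          lengthPerm β = 2 * p ↔ β = 1 ∨ β = deltaPerm p ∨ β = gammaPerm p)) ∧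
    (3 ≤ p →
      (lengthPerm ((gammaPerm p)⁻¹ * β) + lengthPerm (β⁻¹ * deltaPerm p) +
          lengthPerm β = 2 * p ↔ β = deltaPerm p)) := by
  have hiff := permDist_add_eq_two_mul_iff (σ := β) hp
  have hle := two_mul_le_permDist_add hp β
  rw [permDist_one_left] at hiff hle
  refine ⟨hle, fun hp2 ↦ hiff.trans ?_, fun hp3 ↦ hiff.trans ?_⟩
  · simp only [hp2, true_and, or_left_comm]
  · exact or_iff_left fun hp2 ↦ by omega
end
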